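/- arXiv:2507.02889 — 2 statements merged into one kernel-verified Lean document; each statement's English description precedes it below -/
import Mathlib

section
/- Let α > 0, β > 0, γ > 0, λ ∈ ℝ, and let s > 0 be a real number with |λ| < s^α. Then ∫₀^∞ e^{−st} · (∑_{k=0}^∞ (Γ(γ+k)/(Γ(γ) · k!)) · k · λ^k · t^{αk+β−1} · (ln t − ψ(αk+β)) / Γ(αk+β)) dt = − γ · λ · s^{αγ−β} · ln s / (s^α − λ)^{γ+1}. (The integrand series is the term-by-term derivative with respect to α of t^{β−1} E^γ_{α,β}(λ t^α).) -/
open Real MeasureTheory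

/-- The digamma function `ψ(x) = the logarithmic derivative of Γ`, i.e. the derivative of `log ∘ Γ`. -/
noncomputable def digamma (x : ℝ) : ℝ := deriv (fun y : ℝ => Real.log (Real.Gamma y)) x


noncomputable def pcoef (g : ℝ) (k : ℕ) : ℝ := Real.Gamma (g + k) / (Real.Gamma g * k.factorial)

lemma pcoef_pos {g : ℝ} (hg : 0 < g) (k : ℕ) : 0 < pcoef g k := by
  unfold pcoef
  have h1 := Real.Gamma_pos_of_pos hg
  have h2 : 0 < Real.Gamma (g + k) := Real.Gamma_pos_of_pos (by positivity)
  positivity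

lemma pcoef_zero {g : ℝ} (hg : 0 < g) : pcoef g 0 = 1 := by
  unfold pcoef
  have h1 := Real.Gamma_pos_of_pos hg
  simp [h1.ne']

lemma pcoef_succ {g : ℝ} (hg : 0 < g) (k : ℕ) :
    pcoef g (k + 1) = pcoef g k * (g + k) / (k + 1) := by
  unfold pcoef
  have h1 := Real.Gamma_pos_of_pos hg
  have h3 : Real.Gamma (g + (k + 1 : ℕ)) = (g + k) * Real.Gamma (g + k) := by
    rw [← Real.Gamma_add_one (by positivity)]; congr 1; push_cast; ring
  rw [h3, Nat.factorial_succ]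
  push_cast
  field_simp

lemma pcoef_shift {g : ℝ} (hg : 0 < g) (k : ℕ) :
    (k + 1 : ℝ) * pcoef g (k + 1) = g * pcoef (g + 1) k := by
  unfold pcoef
  have h1 := Real.Gamma_pos_of_pos hg
  have h3 : Real.Gamma (g + (k + 1 : ℕ)) = Real.Gamma (g + 1 + k) := by
    congr 1; push_cast; ring
  rw [h3, Nat.factorial_succ, Real.Gamma_add_one hg.ne']
  push_cast
  field_simp

lemma pcoef_shift' {g : ℝ} (hg : 0 < g) (k : ℕ) :
    (g + k) * pcoef g k = g * pcoef (g + 1) k := by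
  rw [← pcoef_shift hg, pcoef_succ hg]
  field_simp

lemma choose_eq_pcoef {g : ℝ} (hg : 0 < g) (k : ℕ) :
    Ring.choose (g + k - 1) k = pcoef g k := by
  have h := Ring.factorial_nsmul_multichoose_eq_ascPochhammer g k
  have h2 : (ascPochhammer ℕ k).smeval g = k.factorial * pcoef g k := by
    rw [Polynomial.ascPochhammer_smeval_eq_eval]
    induction k with
    | zero => simp [pcoef_zero hg]
    | succ n ih =>
      rw [ascPochhammer_succ_eval, ih (Ring.factorial_nsmul_multichoose_eq_ascPochhammer g n),
        pcoef_succ hg, Nat.factorial_succ]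
      push_cast
      field_simp
  rw [h2, nsmul_eq_mul] at h
  have h3 : (k.factorial : ℝ) ≠ 0 := by positivity
  rw [Ring.choose, ← mul_left_cancel₀ h3 h]
  congr 1
  ring

lemma hasSum_pcoef {g x : ℝ} (hg : 0 < g) (hx : |x| < 1) :
    HasSum (fun k => pcoef g k * x ^ k) (1 / (1 - x) ^ g) := by
  have h := (Real.one_div_one_sub_rpow_hasFPowerSeriesOnBall_zero g).hasSum (y := x) (by
    simpa [enorm_eq_nnnorm, ← NNReal.coe_lt_coe] using hx)
  simpa [choose_eq_pcoef hg, mul_comm, FormalMultilinearSeries.ofScalars_apply_eq] using h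

lemma log_integral {s a : ℝ} (hs : 0 < s) (ha : 0 < a) :
    IntegrableOn (fun t : ℝ => t ^ (a - 1) * (Real.log t * Real.exp (-(s * t)))) (Set.Ioi 0) ∧
    HasDerivAt (fun x => (1 / s) ^ x * Real.Gamma x)
      (∫ t in Set.Ioi (0 : ℝ), t ^ (a - 1) * (Real.log t * Real.exp (-(s * t)))) a := by
  have key := mellin_hasDerivAt_of_isBigO_rpow (E := ℂ) (a := a + 1) (b := 0) (s := (a : ℂ))
    (f := fun t : ℝ => ((Real.exp (-(s * t)) : ℝ) : ℂ)) (by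
      refine (Continuous.continuousOn ?_).locallyIntegrableOn measurableSet_Ioi
      fun_prop) (by
      rw [← Asymptotics.isBigO_norm_left]
      simp_rw [Complex.norm_real, Asymptotics.isBigO_norm_left]
      simpa only [neg_mul] using (isLittleO_exp_neg_mul_rpow_atTop hs _).isBigO) (by simp) (by
      simp_rw [neg_zero, Real.rpow_zero]
      refine Asymptotics.isBigO_const_of_tendsto (?_ : Filter.Tendsto _ _ (nhds (1 : ℂ))) one_ne_zero
      have : Continuous (fun t : ℝ => ((Real.exp (-(s * t)) : ℝ) : ℂ)) := by fun_prop
      have h := this.tendsto 0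
      simp only [mul_zero, neg_zero, Real.exp_zero, Complex.ofReal_one] at h
      exact h.mono_left nhdsWithin_le_nhds) (by simpa using ha)
  obtain ⟨h1, h2⟩ := key
  have e : Set.EqOn (fun t : ℝ => (t : ℂ) ^ ((a : ℂ) - 1) • (Real.log t • ((Real.exp (-(s * t)) : ℝ) : ℂ)))
      (fun t : ℝ => ((t ^ (a - 1) * (Real.log t * Real.exp (-(s * t))) : ℝ) : ℂ)) (Set.Ioi 0) := by
    intro t ht
    have : (t : ℂ) ^ ((a : ℂ) - 1) = ((t ^ (a - 1) : ℝ) : ℂ) := by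
      rw [Complex.ofReal_cpow (le_of_lt ht)]; simp
    simp only [this, smul_eq_mul, Complex.real_smul, Complex.ofReal_mul]
  constructor
  · have h3 := (integrableOn_congr_fun e measurableSet_Ioi).1 h1
    exact h3.re.congr (Filter.Eventually.of_forall fun t => Complex.ofReal_re _)
  · have h4 : mellin (fun t : ℝ => Real.log t • ((Real.exp (-(s * t)) : ℝ) : ℂ)) a =
        ((∫ t in Set.Ioi (0 : ℝ), t ^ (a - 1) * (Real.log t * Real.exp (-(s * t))) : ℝ) : ℂ) := by
      rw [mellin, setIntegral_congr_fun measurableSet_Ioi e]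
      exact integral_ofReal
    rw [h4] at h2
    have h5 := h2.real_of_complex
    rw [Complex.ofReal_re] at h5
    refine h5.congr_of_eventuallyEq ?_
    filter_upwards [lt_mem_nhds ha] with x hx
    have := Complex.integral_cpow_mul_exp_neg_mul_Ioi (a := x) (by simpa using hx) hs
    simp only [mellin, smul_eq_mul]
    push_cast
    rw [this, Complex.Gamma_ofReal]
    have h6 : (1 / (s : ℂ)) ^ (x : ℂ) = (((1 / s) ^ x : ℝ) : ℂ) := by
      rw [Complex.ofReal_cpow (by positivity)]; simp
    rw [h6, ← Complex.ofReal_mul, Complex.ofReal_re]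

lemma pow_int {s a : ℝ} (hs : 0 < s) (ha : 0 < a) :
    IntegrableOn (fun t : ℝ => t ^ (a - 1) * Real.exp (-(s * t))) (Set.Ioi 0) := by
  by_contra h
  have h1 := Real.integral_rpow_mul_exp_neg_mul_Ioi ha hs
  rw [integral_undef h] at h1
  have := Real.Gamma_pos_of_pos ha
  have : 0 < (1 / s) ^ a * Real.Gamma a := by positivity
  linarith

lemma digamma_mul {a : ℝ} (ha : 0 < a) : digamma a * Real.Gamma a = deriv Real.Gamma a := by
  have h := Real.Gamma_pos_of_pos ha
  have hd : DifferentiableAt ℝ Real.Gamma a :=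
    Real.differentiableAt_Gamma (fun m => by
      have : (0:ℝ) ≤ m := by positivity
      linarith)
  unfold digamma
  rw [deriv.log hd h.ne']
  field_simp

lemma log_integral_val {s a : ℝ} (hs : 0 < s) (ha : 0 < a) :
    ∫ t in Set.Ioi (0 : ℝ), t ^ (a - 1) * (Real.log t * Real.exp (-(s * t))) =
      (1 / s) ^ a * Real.Gamma a * (digamma a - Real.log s) := by
  have hd : DifferentiableAt ℝ Real.Gamma a :=
    Real.differentiableAt_Gamma (fun m => by
      have : (0:ℝ) ≤ m := by positivity
      linarith)
  have h1 := (log_integral hs ha).2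
  have h2 := ((Real.hasStrictDerivAt_const_rpow (show 0 < 1 / s by positivity) a).hasDerivAt).mul
    hd.hasDerivAt
  rw [h1.unique h2, ← digamma_mul ha, one_div, Real.log_inv]
  ring

lemma abs_log_le {t : ℝ} (ht : 0 < t) : |Real.log t| ≤ t + t⁻¹ := by
  have h1 := Real.log_le_sub_one_of_pos ht
  have h2 := Real.log_le_sub_one_of_pos (inv_pos.2 ht)
  rw [Real.log_inv] at h2
  have := inv_pos.2 ht
  rw [abs_le]; constructor <;> linarith

lemma abs_log_integral_le {s a : ℝ} (hs : 0 < s) (ha : 2 ≤ a) :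
    ∫ t in Set.Ioi (0 : ℝ), |t ^ (a - 1) * (Real.log t * Real.exp (-(s * t)))| ≤
      (1 / s) ^ a * Real.Gamma a * (a * (1 / s + s)) := by
  have hp : 0 < (1 / s) ^ (a - 1) := by positivity
  have e1 := Real.integral_rpow_mul_exp_neg_mul_Ioi (show 0 < a + 1 by linarith) hs
  have e2 := Real.integral_rpow_mul_exp_neg_mul_Ioi (show 0 < a - 1 by linarith) hs
  have i1 := pow_int hs (show 0 < a + 1 by linarith)
  have i2 := pow_int hs (show 0 < a - 1 by linarith)
  have g1 : Real.Gamma (a + 1) = a * Real.Gamma a := Real.Gamma_add_one (by linarith)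
  have g2 : Real.Gamma a = (a - 1) * Real.Gamma (a - 1) := by
    rw [← Real.Gamma_add_one (by linarith)]; simp
  have g3 : 0 < Real.Gamma (a - 1) := Real.Gamma_pos_of_pos (by linarith)
  have r1 : (1 / s) ^ (a + 1) = (1 / s) ^ a * (1 / s) := Real.rpow_add_one (by positivity) _
  have r2 : (1 / s) ^ (a - 1) = (1 / s) ^ a * s := by
    rw [Real.rpow_sub_one (by positivity)]; field_simp
  have hq : 0 < (1 / s) ^ a := by positivity
  calc _ ≤ ∫ t in Set.Ioi (0 : ℝ), (t ^ (a + 1 - 1) * Real.exp (-(s * t)) +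
            t ^ (a - 1 - 1) * Real.exp (-(s * t))) := by
        refine setIntegral_mono_on (log_integral hs (by linarith)).1.abs (i1.add i2)
          measurableSet_Ioi ?_
        intro t ht
        have ht : 0 < t := ht
        have p1 : t ^ (a + 1 - 1) = t ^ (a - 1) * t := by
          rw [← Real.rpow_add_one ht.ne']; congr 1; ring
        have p2 : t ^ (a - 1 - 1) = t ^ (a - 1) * t⁻¹ := by
          rw [Real.rpow_sub_one ht.ne' (a - 1)]; rfl
        rw [p1, p2, abs_mul, abs_mul, Real.abs_exp, abs_of_pos (Real.rpow_pos_of_pos ht _)]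
        have := abs_log_le ht
        have q := Real.rpow_pos_of_pos ht (a - 1)
        have q2 := Real.exp_pos (-(s * t))
        calc _ ≤ t ^ (a - 1) * ((t + t⁻¹) * Real.exp (-(s * t))) := by gcongr
          _ = _ := by ring
    _ = (1 / s) ^ (a + 1) * Real.Gamma (a + 1) + (1 / s) ^ (a - 1) * Real.Gamma (a - 1) := by
        rw [integral_add i1 i2, e1, e2]
    _ ≤ _ := by
        rw [g1, r1, r2]
        have : Real.Gamma (a - 1) ≤ Real.Gamma a * a := by rw [g2]; nlinarith [mul_nonneg g3.le (show 0 ≤ a - 2 by linarith), mul_nonneg g3.le (mul_nonneg (show 0 ≤ a - 2 by linarith) (show 0 ≤ a - 2 by linarith))]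
        calc _ ≤ (1 / s) ^ a * (1 / s) * (a * Real.Gamma a) +
                (1 / s) ^ a * s * (Real.Gamma a * a) := by gcongr
          _ = _ := by ring

lemma abs_digamma_le {a : ℝ} (ha : 2 ≤ a) : |digamma a| ≤ 2 * a := by
  have h0 : 0 < a := by linarith
  have h1 := abs_log_integral_le one_pos ha
  have h2 := log_integral_val one_pos h0
  have h3 := abs_integral_le_integral_abs (μ := volume.restrict (Set.Ioi (0 : ℝ)))
    (f := fun t : ℝ => t ^ (a - 1) * (Real.log t * Real.exp (-(1 * t))))
  rw [h2] at h3
  have g := Real.Gamma_pos_of_pos h0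
  simp only [div_one, Real.one_rpow, one_mul, Real.log_one, sub_zero] at h1 h3
  rw [abs_mul, abs_of_pos g] at h3
  have := le_of_mul_le_mul_left (h3.trans h1) g
  linarith

/-- the `k`-th kernel -/
noncomputable def ker (s a t : ℝ) : ℝ :=
  Real.exp (-(s * t)) * (t ^ (a - 1) * (Real.log t - digamma a) / Real.Gamma a)

lemma ker_eq (s a : ℝ) : ker s a = fun t => (Real.Gamma a)⁻¹ *
    (t ^ (a - 1) * (Real.log t * Real.exp (-(s * t))) -
      digamma a * (t ^ (a - 1) * Real.exp (-(s * t)))) := by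
  funext t; unfold ker; rw [div_eq_mul_inv]; ring

lemma ker_integrable {s a : ℝ} (hs : 0 < s) (ha : 0 < a) :
    IntegrableOn (ker s a) (Set.Ioi 0) := by
  rw [ker_eq]
  exact ((log_integral hs ha).1.sub ((pow_int hs ha).const_mul _)).const_mul _

lemma ker_integral {s a : ℝ} (hs : 0 < s) (ha : 0 < a) :
    ∫ t in Set.Ioi (0 : ℝ), ker s a t = - ((1 / s) ^ a * Real.log s) := by
  have g := Real.Gamma_pos_of_pos ha
  rw [ker_eq, integral_const_mul, integral_sub (log_integral hs ha).1 ((pow_int hs ha).const_mul _),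
    integral_const_mul, log_integral_val hs ha, Real.integral_rpow_mul_exp_neg_mul_Ioi ha hs]
  field_simp
  ring

lemma ker_norm {s a : ℝ} (hs : 0 < s) (ha : 2 ≤ a) :
    ∫ t in Set.Ioi (0 : ℝ), ‖ker s a t‖ ≤ (1 / s) ^ a * (a * (1 / s + s + 2)) := by
  have h0 : 0 < a := by linarith
  have g := Real.Gamma_pos_of_pos h0
  have i1 := (log_integral hs h0).1.abs
  have i2 := (pow_int hs h0).const_mul |digamma a|
  calc _ ≤ ∫ t in Set.Ioi (0 : ℝ), (Real.Gamma a)⁻¹ *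
      (|t ^ (a - 1) * (Real.log t * Real.exp (-(s * t)))| +
        |digamma a| * (t ^ (a - 1) * Real.exp (-(s * t)))) := by
        refine setIntegral_mono_on (ker_integrable hs h0).norm ((i1.add i2).const_mul _)
          measurableSet_Ioi ?_
        intro t ht
        have ht : 0 < t := ht
        have q := Real.rpow_pos_of_pos ht (a - 1)
        rw [ker_eq, Real.norm_eq_abs, abs_mul, abs_of_pos (inv_pos.2 g)]
        gcongr
        refine (abs_sub _ _).trans (le_of_eq ?_)
        rw [abs_mul (digamma a), abs_of_pos (mul_pos q (Real.exp_pos _))]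
    _ = (Real.Gamma a)⁻¹ * ((∫ t in Set.Ioi (0 : ℝ), |t ^ (a - 1) * (Real.log t * Real.exp (-(s * t)))|) + |digamma a| * ((1 / s) ^ a * Real.Gamma a)) := by
        rw [integral_const_mul, integral_add i1 i2, integral_const_mul,
          Real.integral_rpow_mul_exp_neg_mul_Ioi h0 hs]
    _ ≤ (Real.Gamma a)⁻¹ * ((1 / s) ^ a * Real.Gamma a * (a * (1 / s + s)) + 2 * a * ((1 / s) ^ a * Real.Gamma a)) := by
        gcongr
        · exact abs_log_integral_le hs ha
        · exact abs_digamma_le ha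
    _ = _ := by field_simp

lemma one_div_rpow_split {s : ℝ} (hs : 0 < s) (α β : ℝ) (k : ℕ) :
    (1 / s) ^ (α * k + β) = s ^ (-β) * (1 / s ^ α) ^ k := by
  rw [one_div, Real.inv_rpow hs.le, ← Real.rpow_neg hs.le, neg_add, Real.rpow_add hs, one_div,
    ← Real.rpow_neg hs.le, ← Real.rpow_natCast, ← Real.rpow_mul hs.le]
  rw [mul_comm]; congr 2; ring

lemma summable_main {α β γ y : ℝ} (hα : 0 < α) (hβ : 0 < β) (hγ : 0 < γ) (hy : 0 ≤ y)
    (hy1 : y < 1) : Summable (fun k : ℕ => pcoef γ k * k * y ^ k * (α * k + β)) := by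
  rw [← summable_nat_add_iff 1]
  have hs := ((hasSum_pcoef (g := γ + 1 + 1) (x := y) (by linarith)
    (by rwa [abs_of_nonneg hy])).summable).mul_left (γ * (α + β) * (γ + 1) * y)
  refine Summable.of_nonneg_of_le (fun k => ?_) (fun k => ?_) hs
  · have := pcoef_pos hγ (k + 1); positivity
  · have e1 := pcoef_shift hγ k
    have e2 := pcoef_shift' (show 0 < γ + 1 by linarith) k
    have p1 := pcoef_pos (show 0 < γ + 1 by linarith) k
    have hk : (0 : ℝ) ≤ k := by positivity
    calc _ = ((k + 1 : ℝ) * pcoef γ (k + 1)) * y ^ (k + 1) * (α * (k + 1) + β) := by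
          push_cast; ring
      _ = γ * pcoef (γ + 1) k * y ^ (k + 1) * (α * (k + 1) + β) := by rw [e1]
      _ ≤ γ * pcoef (γ + 1) k * y ^ (k + 1) * ((α + β) * (γ + 1 + k)) := by
          gcongr
          nlinarith [mul_nonneg hβ.le hk, mul_pos hα hγ, mul_pos hβ hγ]
      _ = γ * (α + β) * y ^ (k + 1) * ((γ + 1 + k) * pcoef (γ + 1) k) := by ring
      _ = _ := by rw [e2]; ring

lemma hasSum_main {γ x : ℝ} (hγ : 0 < γ) (hx : |x| < 1) :
    HasSum (fun k : ℕ => pcoef γ k * k * x ^ k) (γ * x / (1 - x) ^ (γ + 1)) := by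
  rw [← hasSum_nat_add_iff' 1]
  have h := (hasSum_pcoef (g := γ + 1) (by linarith) hx).mul_left (γ * x)
  have e0 : γ * x / (1 - x) ^ (γ + 1) - ∑ i ∈ Finset.range 1, pcoef γ i * i * x ^ i =
      γ * x * (1 / (1 - x) ^ (γ + 1)) := by
    simp; ring
  rw [e0]
  convert! h using 2 with k
  have e1 := pcoef_shift hγ k
  push_cast
  linear_combination x ^ (k + 1) * e1

theorem laplace_deriv_alpha_Prabhakar (α β γ lam s : ℝ) (hα : 0 < α) (hβ : 0 < β)
    (hγ : 0 < γ) (hs : 0 < s) (hlam : |lam| < s ^ α) :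
    (∫ t in Set.Ioi (0 : ℝ), Real.exp (-(s * t)) *
        ∑' k : ℕ, (Real.Gamma (γ + k) / (Real.Gamma γ * k.factorial)) *
          ((k : ℝ) * lam ^ k * t ^ (α * k + β - 1) *
            (Real.log t - digamma (α * k + β)) / Real.Gamma (α * k + β)))
      = -(γ * lam * s ^ (α * γ - β) * Real.log s / (s ^ α - lam) ^ (γ + 1)) := by
  have hsa : 0 < s ^ α := by positivity
  have hpos : ∀ k : ℕ, 0 < α * k + β := fun k => by positivity
  set F : ℕ → ℝ → ℝ := fun k t => (pcoef γ k * k * lam ^ k) * ker s (α * k + β) t with hF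
  have hFi : ∀ k, Integrable (F k) (volume.restrict (Set.Ioi 0)) := fun k =>
    (ker_integrable hs (hpos k)).const_mul _
  have hy1 : |lam| / s ^ α < 1 := (div_lt_one hsa).2 hlam
  have hsum : Summable fun k => ∫ t in Set.Ioi (0 : ℝ), ‖F k t‖ := by
    have h1 := (summable_main hα hβ hγ (by positivity) hy1).mul_left (s ^ (-β) * (1 / s + s + 2))
    refine Summable.of_norm_bounded_eventually_nat h1 ?_
    have ht : Filter.Tendsto (fun k : ℕ => α * (k : ℝ) + β) Filter.atTop Filter.atTop :=
      Filter.tendsto_atTop_add_const_right _ _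
        (Filter.Tendsto.const_mul_atTop hα tendsto_natCast_atTop_atTop)
    filter_upwards [ht.eventually_ge_atTop 2] with k hk
    have hn := ker_norm hs hk
    have hc := pcoef_pos hγ k
    simp only [hF, norm_mul, integral_const_mul]
    rw [one_div_rpow_split hs] at hn
    have h0 : 0 ≤ ∫ t in Set.Ioi (0 : ℝ), ‖ker s (α * k + β) t‖ :=
      integral_nonneg fun _ => norm_nonneg _
    have hk0 : (0 : ℝ) ≤ k := Nat.cast_nonneg k
    rw [Real.norm_of_nonneg h0]
    simp only [norm_norm, norm_pow, Real.norm_eq_abs, abs_abs, abs_of_pos hc, abs_of_nonneg hk0]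
    simp only [Real.norm_eq_abs] at hn
    calc _ ≤ pcoef γ k * k * |lam| ^ k * (s ^ (-β) * (1 / s ^ α) ^ k *
          ((α * k + β) * (1 / s + s + 2))) := by gcongr
      _ = _ := by rw [div_pow, div_pow]; ring
  have hint := (hasSum_integral_of_summable_integral_norm hFi hsum).tsum_eq
  have hx : |lam / s ^ α| < 1 := by rwa [abs_div, abs_of_pos hsa]
  have hval : ∑' k, ∫ t in Set.Ioi (0 : ℝ), F k t =
      -(s ^ (-β) * Real.log s) * (γ * (lam / s ^ α) / (1 - lam / s ^ α) ^ (γ + 1)) := by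
    rw [← ((hasSum_main hγ hx).mul_left _).tsum_eq]
    congr 1
    funext k
    simp only [hF]
    rw [integral_const_mul, ker_integral hs (hpos k), one_div_rpow_split hs, div_pow, div_pow]
    ring
  calc _ = ∫ t in Set.Ioi (0 : ℝ), ∑' k, F k t := by
        congr 1
        funext t
        rw [← tsum_mul_left]
        congr 1
        funext k
        simp only [hF, ker, pcoef]
        ring
    _ = _ := by
        rw [← hint, hval]
        have hd : 0 < s ^ α - lam := by linarith [(abs_lt.1 hlam).2]
        have e : 1 - lam / s ^ α = (s ^ α - lam) / s ^ α := by field_simp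
        rw [e, Real.div_rpow hd.le hsa.le]
        have e2 : s ^ (α * γ - β) = s ^ (-β) * ((s ^ α) ^ (γ + 1) / s ^ α) := by
          rw [Real.rpow_add_one hsa.ne', ← Real.rpow_mul hs.le, sub_eq_neg_add, Real.rpow_add hs]
          field_simp
        rw [e2]
        have := Real.rpow_pos_of_pos hd (γ + 1)
        have := Real.rpow_pos_of_pos hsa (γ + 1)
        field_simp
end

section
/- Let α₁, β₁, α₂, β₂ > 0, λ ∈ ℝ, and let s > 0 be a real number. Then ∫₀^∞ e^{−st} · (∑_{k=0}^∞ k · λ^k · t^{α₁k+β₁−1} · (ln t − ψ(α₁k+β₁)) / (Γ(α₁k+β₁) · Γ(α₂k+β₂))) dt = − (ln s / s^{β₁}) · ∑_{k=0}^∞ k · (λ · s^{−α₁})^k / Γ(α₂k+β₂). (The integrand series is the term-by-term derivative with respect to α₁ of t^{β₁−1} E_{(α₁,β₁),(α₂,β₂)}(λ t^{α₁}).) -/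
open Real MeasureTheory

theorem aux_abs_log_le {u ε : ℝ} (hu : 0 < u) (hε : 0 < ε) :
    |Real.log u| ≤ u + ε⁻¹ * u ^ (-ε) := by
  have h1 : Real.log u ≤ u := (Real.log_le_sub_one_of_pos hu).trans (by linarith)
  have h2 := Real.log_le_rpow_div (inv_pos.mpr hu).le hε
  rw [Real.log_inv, Real.inv_rpow hu.le, ← Real.rpow_neg hu.le, div_eq_inv_mul] at h2
  have h3 : 0 < ε⁻¹ * u ^ (-ε) := by positivity
  rw [abs_le]
  constructor <;> linarith

theorem aux_dom {x u ε : ℝ} (hu : 0 < u) (hε : 0 < ε) :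
    Real.exp (-u) * u ^ (x - 1) * |Real.log u| ≤
      Real.exp (-u) * u ^ (x + 1 - 1) + ε⁻¹ * (Real.exp (-u) * u ^ (x - ε - 1)) := by
  have h := mul_le_mul_of_nonneg_left (aux_abs_log_le hu hε)
    (by positivity : 0 ≤ Real.exp (-u) * u ^ (x - 1))
  refine h.trans (le_of_eq ?_)
  have e1 : u ^ (x + 1 - 1) = u ^ (x - 1) * u := by
    rw [show x + 1 - 1 = (x - 1) + 1 by ring, Real.rpow_add hu, Real.rpow_one]
  have e2 : u ^ (x - ε - 1) = u ^ (x - 1) * u ^ (-ε) := by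
    rw [show x - ε - 1 = (x - 1) + -ε by ring, Real.rpow_add hu]
  rw [e1, e2]; ring

theorem aux_int_log {x : ℝ} (hx : 0 < x) :
    IntegrableOn (fun u : ℝ => Real.exp (-u) * u ^ (x - 1) * Real.log u) (Set.Ioi 0) := by
  have hd : IntegrableOn (fun u : ℝ => Real.exp (-u) * u ^ (x + 1 - 1) +
      (x / 2)⁻¹ * (Real.exp (-u) * u ^ (x - x / 2 - 1))) (Set.Ioi 0) :=
    (Real.GammaIntegral_convergent (by linarith)).add
      ((Real.GammaIntegral_convergent (s := x - x / 2) (by linarith)).const_mul _)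
  refine Integrable.mono' hd ?_ ?_
  · exact Measurable.aestronglyMeasurable (by fun_prop)
  · filter_upwards [ae_restrict_mem measurableSet_Ioi] with u hu
    have hu' : 0 < u := hu
    rw [norm_mul, Real.norm_of_nonneg (by positivity), Real.norm_eq_abs]
    exact aux_dom hu' (by linarith)

theorem aux_Gamma_sub {x ε : ℝ} (hε : 0 < ε) (hε1 : ε ≤ 1) (hx : ε < x) :
    Real.Gamma (x - ε) ≤ (1 + x) * Real.Gamma x / (x - ε) := by
  have hx0 : 0 < x := by linarith
  rw [le_div_iff₀ (by linarith), mul_comm, ← Real.Gamma_add_one (by linarith), add_mul, one_mul,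
    ← Real.Gamma_add_one hx0.ne', Real.Gamma_eq_integral (by linarith), Real.Gamma_eq_integral hx0,
    Real.Gamma_eq_integral (by linarith : 0 < x + 1),
    ← integral_add (Real.GammaIntegral_convergent hx0)
      (Real.GammaIntegral_convergent (by linarith))]
  refine setIntegral_mono_on (Real.GammaIntegral_convergent (by linarith))
    ((Real.GammaIntegral_convergent hx0).add
      (Real.GammaIntegral_convergent (by linarith))) measurableSet_Ioi ?_
  intro u hu
  have hu' : 0 < u := hu
  show Real.exp (-u) * _ ≤ Real.exp (-u) * _ + Real.exp (-u) * _
  rw [← mul_add]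
  refine mul_le_mul_of_nonneg_left ?_ (Real.exp_nonneg _)
  rcases le_total u 1 with h | h
  · have := Real.rpow_le_rpow_of_exponent_ge hu' h (by linarith : x - 1 ≤ x - ε + 1 - 1)
    have : 0 ≤ u ^ (x + 1 - 1) := by positivity
    linarith
  · have := Real.rpow_le_rpow_of_exponent_le h (by linarith : x - ε + 1 - 1 ≤ x + 1 - 1)
    have : 0 ≤ u ^ (x - 1) := by positivity
    linarith

theorem aux_M {b : ℝ} (hb : 0 < b) : ∃ K : ℝ, 0 ≤ K ∧ ∀ x, b ≤ x →
    ∫ u in Set.Ioi (0 : ℝ), Real.exp (-u) * u ^ (x - 1) * |Real.log u|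
      ≤ K * (1 + x) * Real.Gamma x := by
  set ε := min 1 (b / 2) with hεd
  have hε : 0 < ε := by positivity
  have hε1 : ε ≤ 1 := min_le_left _ _
  have hεb : ε ≤ b / 2 := min_le_right _ _
  refine ⟨1 + ε⁻¹ * (b / 2)⁻¹, by positivity, fun x hx => ?_⟩
  have hx0 : 0 < x := by linarith
  have i1 := Real.GammaIntegral_convergent (s := x + 1) (by linarith)
  have i2 := (Real.GammaIntegral_convergent (s := x - ε) (by linarith)).const_mul ε⁻¹
  have h1 : ∫ u in Set.Ioi (0 : ℝ), Real.exp (-u) * u ^ (x - 1) * |Real.log u|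
      ≤ ∫ u in Set.Ioi (0 : ℝ), (Real.exp (-u) * u ^ (x + 1 - 1) +
        ε⁻¹ * (Real.exp (-u) * u ^ (x - ε - 1))) := by
    refine setIntegral_mono_on ?_ (i1.add i2) measurableSet_Ioi fun u hu => aux_dom hu hε
    refine IntegrableOn.congr_fun (aux_int_log hx0).norm ?_ measurableSet_Ioi
    intro u hu
    have hu' : 0 < u := hu
    show ‖_‖ = _
    rw [norm_mul, Real.norm_of_nonneg (by positivity), Real.norm_eq_abs]
  rw [integral_add i1 i2, integral_const_mul, ← Real.Gamma_eq_integral (by linarith),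
    ← Real.Gamma_eq_integral (by linarith), Real.Gamma_add_one hx0.ne'] at h1
  have hG : 0 < Real.Gamma x := Real.Gamma_pos_of_pos hx0
  have h2 : Real.Gamma (x - ε) ≤ (b / 2)⁻¹ * ((1 + x) * Real.Gamma x) := by
    refine (aux_Gamma_sub hε hε1 (by linarith)).trans ?_
    rw [div_eq_inv_mul]
    gcongr
    linarith
  have h3 := mul_le_mul_of_nonneg_left h2 (inv_pos.mpr hε).le
  calc _ ≤ _ := h1
    _ ≤ x * Real.Gamma x + ε⁻¹ * ((b / 2)⁻¹ * ((1 + x) * Real.Gamma x)) := by linarith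
    _ ≤ _ := by
      have : (1 + ε⁻¹ * (b / 2)⁻¹) * (1 + x) * Real.Gamma x = x * Real.Gamma x + ε⁻¹ * ((b / 2)⁻¹ * ((1 + x) * Real.Gamma x)) + Real.Gamma x := by ring
      linarith

theorem aux_digamma {x : ℝ} (hx : 0 < x) :
    ∫ u in Set.Ioi (0 : ℝ), Real.exp (-u) * u ^ (x - 1) * Real.log u
      = digamma x * Real.Gamma x := by
  have hc := (Complex.hasDerivAt_GammaIntegral (s := (x : ℂ)) (by simpa using hx))
  have hr := hc.real_of_complex
  have hG : HasDerivAt Real.Gamma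
      (∫ u in Set.Ioi (0 : ℝ), Real.exp (-u) * u ^ (x - 1) * Real.log u) x := by
    have e : (∫ t : ℝ in Set.Ioi 0, (t : ℂ) ^ ((x : ℂ) - 1) * (Real.log t * Real.exp (-t)))
        = ((∫ u in Set.Ioi (0 : ℝ), Real.exp (-u) * u ^ (x - 1) * Real.log u : ℝ) : ℂ) := by
      rw [← integral_complex_ofReal]
      refine setIntegral_congr_fun measurableSet_Ioi fun t ht => ?_
      have ht' : 0 < t := ht
      push_cast [Complex.ofReal_cpow ht'.le]
      ring
    rw [e, Complex.ofReal_re] at hr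
    refine hr.congr_of_eventuallyEq ?_
    filter_upwards [lt_mem_nhds hx] with y hy
    rw [Complex.GammaIntegral_ofReal, Complex.ofReal_re, Real.Gamma_eq_integral hy]
  have hne := (Real.Gamma_pos_of_pos hx).ne'
  rw [digamma, (hG.log hne).deriv, div_mul_cancel₀ _ hne]

theorem aux_int_g {x c : ℝ} (hx : 0 < x) :
    IntegrableOn (fun u : ℝ => Real.exp (-u) * u ^ (x - 1) * (Real.log u - c)) (Set.Ioi 0) := by
  refine ((aux_int_log hx).sub ((Real.GammaIntegral_convergent hx).const_mul c)).congr ?_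
  filter_upwards with u
  simp only [Pi.sub_apply]
  ring

theorem aux_scale {x s p t : ℝ} (hs : 0 < s) (ht : 0 < t) :
    Real.exp (-(s * t)) * (t ^ (x - 1) * (Real.log t - p)) =
      s ^ (1 - x) * (Real.exp (-(s * t)) * (s * t) ^ (x - 1) *
        (Real.log (s * t) - (Real.log s + p))) := by
  rw [Real.mul_rpow hs.le ht.le, Real.log_mul hs.ne' ht.ne']
  have : s ^ (1 - x) * s ^ (x - 1) = 1 := by
    rw [← Real.rpow_add hs]; simp
  linear_combination (-Real.exp (-(s * t)) * (t ^ (x - 1) * (Real.log t - p))) * this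

theorem aux_int {x s p : ℝ} (hx : 0 < x) (hs : 0 < s) :
    IntegrableOn (fun t : ℝ => Real.exp (-(s * t)) * (t ^ (x - 1) * (Real.log t - p)))
      (Set.Ioi 0) := by
  have h := (integrableOn_Ioi_comp_mul_left_iff (fun u : ℝ => Real.exp (-u) * u ^ (x - 1) *
    (Real.log u - (Real.log s + p))) 0 hs).mpr (by simpa using aux_int_g hx)
  exact IntegrableOn.congr_fun (h.const_mul (s ^ (1 - x))) (fun t ht => (aux_scale hs ht).symm)
    measurableSet_Ioi

theorem aux_val {x s : ℝ} (hx : 0 < x) (hs : 0 < s) :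
    ∫ t in Set.Ioi (0 : ℝ), Real.exp (-(s * t)) * (t ^ (x - 1) * (Real.log t - digamma x))
      = -(Real.log s * s ^ (-x) * Real.Gamma x) := by
  rw [setIntegral_congr_fun measurableSet_Ioi (fun t ht => aux_scale hs ht), integral_const_mul,
    integral_comp_mul_left_Ioi (fun u : ℝ => Real.exp (-u) * u ^ (x - 1) *
      (Real.log u - (Real.log s + digamma x))) 0 hs, mul_zero]
  have : ∫ u in Set.Ioi (0 : ℝ), Real.exp (-u) * u ^ (x - 1) *
      (Real.log u - (Real.log s + digamma x)) = -(Real.log s * Real.Gamma x) := by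
    have e : ∀ u : ℝ, Real.exp (-u) * u ^ (x - 1) * (Real.log u - (Real.log s + digamma x))
      = Real.exp (-u) * u ^ (x - 1) * Real.log u
        - (Real.log s + digamma x) * (Real.exp (-u) * u ^ (x - 1)) := fun u => by ring
    simp_rw [e]
    rw [integral_sub (aux_int_log hx) ((Real.GammaIntegral_convergent hx).const_mul _),
      integral_const_mul, aux_digamma hx, ← Real.Gamma_eq_integral hx]
    ring
  rw [this, smul_eq_mul, show -x = (1 - x) + (-1) by ring, Real.rpow_add hs, Real.rpow_neg_one]
  ring

theorem aux_norm {b s : ℝ} (hb : 0 < b) (hs : 0 < s) : ∃ K : ℝ, 0 ≤ K ∧ ∀ x, b ≤ x →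
    ∫ t in Set.Ioi (0 : ℝ), ‖Real.exp (-(s * t)) * (t ^ (x - 1) * (Real.log t - digamma x))‖
      ≤ K * (1 + x) * (s ^ (-x) * Real.Gamma x) := by
  obtain ⟨K, hK, hM⟩ := aux_M hb
  refine ⟨2 * K + |Real.log s|, by positivity, fun x hx => ?_⟩
  have hx0 : 0 < x := by linarith
  have hG : 0 < Real.Gamma x := Real.Gamma_pos_of_pos hx0
  have hlog : IntegrableOn (fun u : ℝ => Real.exp (-u) * u ^ (x - 1) * |Real.log u|)
      (Set.Ioi 0) := by
    refine IntegrableOn.congr_fun (aux_int_log hx0).norm ?_ measurableSet_Ioi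
    intro u hu
    have hu' : 0 < u := hu
    show ‖_‖ = _
    rw [norm_mul, Real.norm_of_nonneg (by positivity), Real.norm_eq_abs]
  have hpsi : |digamma x| * Real.Gamma x ≤ K * (1 + x) * Real.Gamma x := by
    refine le_trans ?_ (hM x hx)
    rw [← abs_of_pos hG, ← abs_mul, ← aux_digamma hx0]
    refine (abs_integral_le_integral_abs).trans (le_of_eq ?_)
    refine setIntegral_congr_fun measurableSet_Ioi fun u hu => ?_
    have hu' : 0 < u := hu
    show |_| = _
    rw [abs_mul, abs_of_nonneg (by positivity)]
  have e1 : ∀ t ∈ Set.Ioi (0 : ℝ),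
      ‖Real.exp (-(s * t)) * (t ^ (x - 1) * (Real.log t - digamma x))‖
      = s ^ (1 - x) * ‖Real.exp (-(s * t)) * (s * t) ^ (x - 1) *
        (Real.log (s * t) - (Real.log s + digamma x))‖ := fun t ht => by
    rw [aux_scale hs ht, norm_mul, Real.norm_of_nonneg (by positivity : 0 ≤ s ^ (1 - x))]
  rw [setIntegral_congr_fun measurableSet_Ioi e1, integral_const_mul,
    integral_comp_mul_left_Ioi (fun u : ℝ => ‖Real.exp (-u) * u ^ (x - 1) *
      (Real.log u - (Real.log s + digamma x))‖) 0 hs, mul_zero, smul_eq_mul]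
  have h1 : ∫ u in Set.Ioi (0 : ℝ), ‖Real.exp (-u) * u ^ (x - 1) *
      (Real.log u - (Real.log s + digamma x))‖ ≤
      ∫ u in Set.Ioi (0 : ℝ), (Real.exp (-u) * u ^ (x - 1) * |Real.log u|
        + (|Real.log s| + |digamma x|) * (Real.exp (-u) * u ^ (x - 1))) := by
    refine setIntegral_mono_on (aux_int_g hx0).norm
      (hlog.add ((Real.GammaIntegral_convergent hx0).const_mul _)) measurableSet_Ioi ?_
    intro u hu
    have hu' : 0 < u := hu
    rw [norm_mul, Real.norm_of_nonneg (by positivity), Real.norm_eq_abs]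
    have : |Real.log u - (Real.log s + digamma x)| ≤
        |Real.log u| + (|Real.log s| + |digamma x|) :=
      (abs_sub _ _).trans (by gcongr; exact abs_add_le _ _)
    have := mul_le_mul_of_nonneg_left this (by positivity : 0 ≤ Real.exp (-u) * u ^ (x - 1))
    linarith
  rw [integral_add hlog ((Real.GammaIntegral_convergent hx0).const_mul _), integral_const_mul,
    ← Real.Gamma_eq_integral hx0] at h1
  have h2 : ∫ u in Set.Ioi (0 : ℝ), ‖Real.exp (-u) * u ^ (x - 1) *
      (Real.log u - (Real.log s + digamma x))‖ ≤
      (2 * K + |Real.log s|) * (1 + x) * Real.Gamma x := by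
    have h3 := hM x hx
    have h4 : 0 ≤ |Real.log s| * x * Real.Gamma x := by positivity
    nlinarith
  calc _ ≤ s ^ (1 - x) * (s⁻¹ * ((2 * K + |Real.log s|) * (1 + x) * Real.Gamma x)) := by gcongr
    _ = _ := by
      rw [show -x = (1 - x) + (-1) by ring, Real.rpow_add hs, Real.rpow_neg_one]
      ring

theorem aux_Gamma_lower {R y : ℝ} (hR : 0 < R) (hy : 1 ≤ y) :
    Real.exp (-R) * R ^ (y - 1) ≤ Real.Gamma y := by
  rw [Real.Gamma_eq_integral (by linarith)]
  have hi := Real.GammaIntegral_convergent (s := y) (by linarith)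
  have hsub : Set.Ioi R ⊆ Set.Ioi 0 := Set.Ioi_subset_Ioi hR.le
  calc Real.exp (-R) * R ^ (y - 1) = ∫ u in Set.Ioi R, Real.exp (-u) * R ^ (y - 1) := by
        rw [integral_mul_const, integral_exp_neg_Ioi]
    _ ≤ ∫ u in Set.Ioi R, Real.exp (-u) * u ^ (y - 1) := by
        refine setIntegral_mono_on ((integrableOn_exp_neg_Ioi R).mul_const _) (hi.mono_set hsub)
          measurableSet_Ioi fun u hu => ?_
        have : R < u := hu
        gcongr
    _ ≤ _ := by
        refine setIntegral_mono_set hi ?_ hsub.eventuallyLE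
        filter_upwards [ae_restrict_mem measurableSet_Ioi] with u hu
        have : 0 < u := hu
        show 0 ≤ Real.exp (-u) * u ^ (y - 1)
        positivity

theorem aux_summable {α β r : ℝ} (m : ℕ) (hα : 0 < α) (hr : 0 ≤ r) :
    Summable (fun k : ℕ => (k : ℝ) ^ m * r ^ k / Real.Gamma (α * k + β)) := by
  set R : ℝ := (2 * r + 1) ^ (α⁻¹) with hRd
  have hR : 0 < R := by positivity
  have hRα : R ^ α = 2 * r + 1 := by
    rw [hRd, ← Real.rpow_mul (by positivity), inv_mul_cancel₀ hα.ne', Real.rpow_one]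
  have hq : ‖r / (2 * r + 1)‖ < 1 := by
    rw [Real.norm_of_nonneg (by positivity), div_lt_one (by positivity)]
    linarith
  have hs := (summable_pow_mul_geometric_of_norm_lt_one m hq).mul_left
    (Real.exp R * R ^ (1 - β))
  refine Summable.of_norm_bounded_eventually_nat hs ?_
  have ht : Filter.Tendsto (fun k : ℕ => α * (k : ℝ) + β) Filter.atTop Filter.atTop :=
    Filter.tendsto_atTop_add_const_right _ _
      (tendsto_natCast_atTop_atTop.const_mul_atTop hα)
  filter_upwards [ht.eventually_ge_atTop 1] with k hk
  have hG := aux_Gamma_lower hR hk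
  have hG0 : 0 < Real.Gamma (α * k + β) := Real.Gamma_pos_of_pos (by linarith)
  rw [Real.norm_of_nonneg (by positivity), div_le_iff₀ hG0]
  have e : R ^ (α * k + β - 1) = (2 * r + 1) ^ k * R ^ (β - 1) := by
    rw [add_sub_assoc, Real.rpow_add hR, Real.rpow_mul hR.le, hRα, Real.rpow_natCast]
  have e2 : R ^ (1 - β) * R ^ (β - 1) = 1 := by rw [← Real.rpow_add hR]; simp
  have e3 : Real.exp R * Real.exp (-R) = 1 := by rw [← Real.exp_add]; simp
  calc (k : ℝ) ^ m * r ^ k = Real.exp R * R ^ (1 - β) * ((k : ℝ) ^ m * (r / (2 * r + 1)) ^ k) *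
        (Real.exp (-R) * R ^ (α * k + β - 1)) := by
        rw [e, div_pow]
        have : (2 * r + 1) ^ k ≠ 0 := by positivity
        field_simp
        linear_combination (-(k : ℝ) ^ m * r ^ k) * e2 * (Real.exp R * Real.exp (-R)) -
          (k : ℝ) ^ m * r ^ k * e3
    _ ≤ _ := by gcongr

theorem laplace_deriv_alpha1_4ML (α₁ β₁ α₂ β₂ lam s : ℝ) (hα₁ : 0 < α₁) (hβ₁ : 0 < β₁)
    (hα₂ : 0 < α₂) (hβ₂ : 0 < β₂) (hs : 0 < s) :
    (∫ t in Set.Ioi (0 : ℝ), Real.exp (-(s * t)) *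
        ∑' k : ℕ, (k : ℝ) * lam ^ k * t ^ (α₁ * k + β₁ - 1) *
          (Real.log t - digamma (α₁ * k + β₁)) /
            (Real.Gamma (α₁ * k + β₁) * Real.Gamma (α₂ * k + β₂)))
      = -((Real.log s / s ^ β₁) *
          ∑' k : ℕ, (k : ℝ) * (lam * s ^ (-α₁)) ^ k / Real.Gamma (α₂ * k + β₂)) := by
  have hx : ∀ k : ℕ, 0 < α₁ * k + β₁ := fun k => by positivity
  have hxb : ∀ k : ℕ, β₁ ≤ α₁ * k + β₁ := fun k => by
    have : 0 ≤ α₁ * k := by positivity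
    linarith
  have hG1 : ∀ k : ℕ, 0 < Real.Gamma (α₁ * k + β₁) := fun k => Real.Gamma_pos_of_pos (hx k)
  have hG2 : ∀ k : ℕ, 0 < Real.Gamma (α₂ * k + β₂) := fun k =>
    Real.Gamma_pos_of_pos (by positivity)
  have hpow : ∀ k : ℕ, s ^ (-(α₁ * k + β₁)) = (s ^ (-α₁)) ^ k * s ^ (-β₁) := fun k => by
    rw [show -(α₁ * k + β₁) = -α₁ * k + -β₁ by ring, Real.rpow_add hs, Real.rpow_mul hs.le,
      Real.rpow_natCast]
  set C : ℕ → ℝ := fun k => (k : ℝ) * lam ^ k /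
    (Real.Gamma (α₁ * k + β₁) * Real.Gamma (α₂ * k + β₂)) with hC
  set F : ℕ → ℝ → ℝ := fun k t => C k * (Real.exp (-(s * t)) *
    (t ^ (α₁ * k + β₁ - 1) * (Real.log t - digamma (α₁ * k + β₁)))) with hF
  have hInt : ∀ k, Integrable (F k) (volume.restrict (Set.Ioi 0)) := fun k =>
    (aux_int (hx k) hs).const_mul _
  obtain ⟨K, hK, hN⟩ := aux_norm hβ₁ hs
  have hSum : Summable (fun k => ∫ t in Set.Ioi (0 : ℝ), ‖F k t‖) := by
    have hr : 0 ≤ |lam| * s ^ (-α₁) := by positivity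
    have b1 := (aux_summable (β := β₂) 1 hα₂ hr).mul_left (K * s ^ (-β₁) * (1 + β₁))
    have b2 := (aux_summable (β := β₂) 2 hα₂ hr).mul_left (K * s ^ (-β₁) * α₁)
    refine Summable.of_nonneg_of_le (fun k => integral_nonneg fun t => norm_nonneg _)
      (fun k => ?_) (b1.add b2)
    have e : ∀ t, ‖F k t‖ = |C k| * ‖Real.exp (-(s * t)) *
      (t ^ (α₁ * k + β₁ - 1) * (Real.log t - digamma (α₁ * k + β₁)))‖ := fun t => by
      rw [hF]; simp only []; rw [norm_mul, Real.norm_eq_abs (C k)]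
    simp_rw [e]
    rw [integral_const_mul]
    refine (mul_le_mul_of_nonneg_left (hN _ (hxb k)) (abs_nonneg _)).trans (le_of_eq ?_)
    rw [hC]
    simp only []
    rw [abs_div, abs_mul, abs_pow, abs_of_pos (mul_pos (hG1 k) (hG2 k)), Nat.abs_cast, hpow k,
      mul_pow]
    have g1 := (hG1 k).ne'
    have g2 := (hG2 k).ne'
    field_simp
    ring
  have key := hasSum_integral_of_summable_integral_norm hInt hSum
  have lhs : (∫ t in Set.Ioi (0 : ℝ), Real.exp (-(s * t)) *
        ∑' k : ℕ, (k : ℝ) * lam ^ k * t ^ (α₁ * k + β₁ - 1) *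
          (Real.log t - digamma (α₁ * k + β₁)) /
            (Real.Gamma (α₁ * k + β₁) * Real.Gamma (α₂ * k + β₂)))
      = ∫ t in Set.Ioi (0 : ℝ), ∑' k, F k t := by
    congr 1
    funext t
    rw [← tsum_mul_left]
    refine tsum_congr fun k => ?_
    rw [hF, hC]
    simp only []
    ring
  rw [lhs, ← key.tsum_eq, ← tsum_mul_left, ← tsum_neg]
  refine tsum_congr fun k => ?_
  rw [hF]
  simp only []
  rw [integral_const_mul, aux_val (hx k) hs, hpow k, hC, Real.rpow_neg hs.le β₁, mul_pow]
  simp only []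
  have g1 := (hG1 k).ne'
  have g2 := (hG2 k).ne'
  have g3 : s ^ β₁ ≠ 0 := by positivity
  field_simp
end
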